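/- Every graph G with maximum degree at most 4 has a vertex partition {V₁, V₂} such that both induced subgraphs G[V₁] and G[V₂] have maximum degree at most 2. -/

import Mathlib

/-!
Let `d v i` be the number of neighbours of its own colour that `v` tolerates when it has colour `i`,
and choose a colouring `c` minimising the number of monochromatic edges minus `∑ v, d v (c v)`.
Recolouring a single vertex `v` with `i` cannot decrease this quantity, so the excess of `v` over
its tolerance is at most what it would be in colour `i`. A vertex with positive excess therefore has
more than `d v i` neighbours of every colour `i`, hence degree at least `∑ i, (d v i + 1)`.
-/

section

open Finset Function

theorem sum_apply_update_add {V ι M : Type*} [Fintype V] [DecidableEq V] [AddCommMonoid M]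
    (d : V → ι → M) (c : V → ι) (v : V) (i : ι) :
    ∑ u, d u (update c v i u) + d v (c v) = ∑ u, d u (c u) + d v i := by
  simp only [apply_update d, sum_update_of_mem (mem_univ v)]
  rw [← sum_sdiff (subset_univ {v}) (f := fun u ↦ d u (c u)), sum_singleton]
  abel

variable {V ι : Type*} (G : SimpleGraph V) (c : V → ι) (v : V)

/-- The spanning subgraph of `G` formed by the edges whose endpoints get the same colour under
the (not necessarily proper) vertex colouring `c`. -/
def monochromaticSubgraph : SimpleGraph V where
  Adj u w := G.Adj u w ∧ c u = c w
  symm := ⟨fun _ _ h ↦ ⟨h.1.symm, h.2.symm⟩⟩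

variable {G c} in
theorem monochromaticSubgraph_adj {u w : V} :
    (monochromaticSubgraph G c).Adj u w ↔ G.Adj u w ∧ c u = c w :=
  Iff.rfl

theorem deleteIncidenceSet_monochromaticSubgraph_update [DecidableEq V] (i : ι) :
    (monochromaticSubgraph G (update c v i)).deleteIncidenceSet v =
      (monochromaticSubgraph G c).deleteIncidenceSet v := by
  ext u w
  simp only [SimpleGraph.deleteIncidenceSet_adj, monochromaticSubgraph_adj]
  refine and_congr_left fun ⟨hu, hw⟩ ↦ ?_
  rw [update_of_ne hu, update_of_ne hw]

variable [DecidableEq ι]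

instance [DecidableRel G.Adj] : DecidableRel (monochromaticSubgraph G c).Adj :=
  fun u w ↦ inferInstanceAs (Decidable (G.Adj u w ∧ c u = c w))

/-- The number of neighbours of `v` that have colour `i` in the (not necessarily proper) vertex
colouring `c`. -/
def colorDegree [Fintype (G.neighborSet v)] (i : ι) : ℕ :=
  #{w ∈ G.neighborFinset v | c w = i}

theorem sum_colorDegree [Fintype (G.neighborSet v)] [Fintype ι] :
    ∑ i, colorDegree G c v i = G.degree v :=
  (card_eq_sum_card_fiberwise fun _ _ ↦ mem_univ _).symm

theorem colorDegree_update_self [DecidableEq V] [Fintype (G.neighborSet v)] (i j : ι) :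
    colorDegree G (update c v j) v i = colorDegree G c v i := by
  refine congrArg card (filter_congr fun w hw ↦ ?_)
  rw [update_of_ne ((G.mem_neighborFinset v w).1 hw).ne']

variable [Fintype V] [DecidableRel G.Adj]

theorem degree_monochromaticSubgraph :
    (monochromaticSubgraph G c).degree v = colorDegree G c v (c v) := by
  refine congrArg card ?_
  ext w
  simp only [SimpleGraph.mem_neighborFinset, mem_filter, monochromaticSubgraph_adj,
    eq_comm (a := c w)]

theorem card_edgeFinset_monochromaticSubgraph_eq_add_colorDegree [DecidableEq V] :
    #(monochromaticSubgraph G c).edgeFinset =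
      #((monochromaticSubgraph G c).deleteIncidenceSet v).edgeFinset +
        colorDegree G c v (c v) := by
  rw [SimpleGraph.card_edgeFinset_deleteIncidenceSet, ← degree_monochromaticSubgraph,
    Nat.sub_add_cancel (SimpleGraph.degree_le_card_edgeFinset _ v)]

theorem card_edgeFinset_monochromaticSubgraph_update [DecidableEq V] (i : ι) :
    #(monochromaticSubgraph G (update c v i)).edgeFinset + colorDegree G c v (c v) =
      #(monochromaticSubgraph G c).edgeFinset + colorDegree G c v i := by
  rw [card_edgeFinset_monochromaticSubgraph_eq_add_colorDegree G (update c v i) v,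
    card_edgeFinset_monochromaticSubgraph_eq_add_colorDegree G c v, update_self,
    colorDegree_update_self,
    SimpleGraph.edgeFinset_inj.2 (deleteIncidenceSet_monochromaticSubgraph_update G c v i),
    add_right_comm]

theorem exists_forall_colorDegree_add_le [Finite ι] [Nonempty (V → ι)] (d : V → ι → ℕ) :
    ∃ c : V → ι, ∀ v i, colorDegree G c v (c v) + d v i ≤ colorDegree G c v i + d v (c v) := by
  classical
  obtain ⟨c, hmin⟩ := Finite.exists_min fun c : V → ι ↦
    (#(monochromaticSubgraph G c).edgeFinset - ∑ u, d u (c u) : ℤ)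
  refine ⟨c, fun v i ↦ ?_⟩
  have hrecolor := hmin (update c v i)
  have hedges := card_edgeFinset_monochromaticSubgraph_update G c v i
  have htolerance := sum_apply_update_add d c v i
  lia

theorem exists_forall_colorDegree_le [Fintype ι] (d : V → ι → ℕ)
    (h : ∀ v, G.degree v < ∑ i, (d v i + 1)) :
    ∃ c : V → ι, ∀ v, colorDegree G c v (c v) ≤ d v (c v) := by
  have : Nonempty (V → ι) := Classical.nonempty_pi.2 fun v ↦
    (nonempty_of_sum_ne_zero (h v).ne_bot).to_type
  obtain ⟨c, hc⟩ := exists_forall_colorDegree_add_le G d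
  refine ⟨c, fun v ↦ ?_⟩
  obtain ⟨i, -, hi⟩ : ∃ i ∈ univ, colorDegree G c v i < d v i + 1 :=
    exists_lt_of_sum_lt ((sum_colorDegree G c v).trans_lt (h v))
  have hexcess := hc v i
  lia

theorem stmt6_general {V ι : Type*} [Fintype V] [DecidableEq V] [Fintype ι]
    (G : SimpleGraph V) [DecidableRel G.Adj] (d : V → ι → ℕ)
    (h : ∀ v, G.degree v < ∑ i, (d v i + 1)) :
    ∃ P : ι → Finset V, Pairwise (Disjoint on P) ∧ univ.biUnion P = univ ∧
      ∀ i, ∀ v ∈ P i, #(G.neighborFinset v ∩ P i) ≤ d v i := by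
  classical
  obtain ⟨c, hc⟩ := exists_forall_colorDegree_le G d h
  refine ⟨fun i ↦ {v | c v = i}, fun i j hij ↦ ?_, by ext; simp, fun i v hv ↦ ?_⟩
  · exact disjoint_filter.2 fun v _ hi hj ↦ hij (hi.symm.trans hj)
  · obtain rfl : c v = i := by simpa using hv
    rw [inter_filter, inter_univ]
    exact hc v

end

/-- Every graph with maximum degree at most 4 has a vertex partition `{V₁, V₂}` such that
both induced subgraphs `G[V₁]`, `G[V₂]` have maximum degree at most 2. -/
theorem stmt6 {V : Type*} [Fintype V] [DecidableEq V]
    (G : SimpleGraph V) [DecidableRel G.Adj]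
    (h : ∀ v, G.degree v ≤ 4) :
    ∃ V₁ V₂ : Finset V, Disjoint V₁ V₂ ∧ V₁ ∪ V₂ = Finset.univ ∧
      (∀ v ∈ V₁, (G.neighborFinset v ∩ V₁).card ≤ 2) ∧
      (∀ v ∈ V₂, (G.neighborFinset v ∩ V₂).card ≤ 2) := by
  obtain ⟨P, hdisj, hcover, hdeg⟩ :=
    stmt6_general G (fun _ (_ : Bool) ↦ 2) fun v ↦ (h v).trans_lt (by simp)
  exact ⟨P true, P false, hdisj (by simp), by simpa using hcover, hdeg true, hdeg false⟩
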